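/- For every real η > 0, one has 2π √η e^{2η³/3} Ai(η²) = ∫_{-∞}^{∞} e^{-t²} cos( t³/(3 η^{3/2}) ) dt, where the integral is an absolutely convergent Lebesgue integral. -/

import Mathlib

open Filter MeasureTheory Real

/-- The Airy function, defined for real `x` by
`Ai(x) = (2π)⁻¹ · lim_{R→∞} ∫_{-R}^{R} e^{i(t³/3 + x t)} dt`. -/
noncomputable def Ai (x : ℝ) : ℂ :=
  ((2 * Real.pi : ℝ)⁻¹ : ℂ) * limUnder Filter.atTop
    (fun R : ℝ => ∫ t in (-R)..R, Complex.exp (Complex.I * ((t : ℂ)^3 / 3 + (x : ℂ) * t)))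

theorem side_tendsto (η : ℝ) (hη : 0 < η) (σ : ℝ) (hσ : σ ^ 2 = 1) :
    Tendsto (fun R : ℝ => ∫ y in (0:ℝ)..η, Complex.exp (Complex.I *
      ((((σ * R : ℝ) : ℂ) + y * Complex.I) ^ 3 / 3 +
        ((η ^ 2 : ℝ) : ℂ) * (((σ * R : ℝ) : ℂ) + y * Complex.I)))) atTop (nhds 0) := by
  have hn : ∀ R y : ℝ, 0 ≤ y → y ≤ η → ‖Complex.exp (Complex.I *
      ((((σ * R : ℝ) : ℂ) + y * Complex.I) ^ 3 / 3 +
        ((η ^ 2 : ℝ) : ℂ) * (((σ * R : ℝ) : ℂ) + y * Complex.I)))‖ ≤ Real.exp (-(R ^ 2 * y)) := by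
    intro R y h0 h1
    rw [Complex.norm_exp]
    apply Real.exp_le_exp.mpr
    have e : (Complex.I *
      ((((σ * R : ℝ) : ℂ) + y * Complex.I) ^ 3 / 3 +
        ((η ^ 2 : ℝ) : ℂ) * (((σ * R : ℝ) : ℂ) + y * Complex.I))) =
        ((-((σ * R) ^ 2 * y) + y ^ 3 / 3 - η ^ 2 * y : ℝ) : ℂ) +
        (((σ * R) ^ 3 / 3 - (σ * R) * y ^ 2 + η ^ 2 * (σ * R) : ℝ) : ℂ) * Complex.I := by
      push_cast
      ring_nf
      simp only [Complex.I_sq, Complex.I_pow_three, Complex.I_pow_four]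
      ring
    rw [e, Complex.add_re, Complex.re_ofReal_mul, Complex.I_re, Complex.ofReal_re, mul_pow, hσ]
    have : y ^ 2 ≤ η ^ 2 := by gcongr
    nlinarith [mul_nonneg h0 (sub_nonneg.mpr this), pow_nonneg h0 3]
  have key := intervalIntegral.tendsto_integral_filter_of_dominated_convergence
    (μ := volume) (a := 0) (b := η) (l := (atTop : Filter ℝ)) (f := fun _ => (0:ℂ))
    (F := fun R y : ℝ => Complex.exp (Complex.I *
      ((((σ * R : ℝ) : ℂ) + y * Complex.I) ^ 3 / 3 +
        ((η ^ 2 : ℝ) : ℂ) * (((σ * R : ℝ) : ℂ) + y * Complex.I)))) (fun _ => (1:ℝ))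
    ?_ ?_ ?_ ?_
  · simpa using key
  · refine Eventually.of_forall fun R => Continuous.aestronglyMeasurable ?_
    fun_prop
  · refine Eventually.of_forall fun R => Eventually.of_forall fun y hy => ?_
    rw [Set.uIoc_of_le hη.le] at hy
    refine (hn R y hy.1.le hy.2).trans ?_
    rw [Real.exp_le_one_iff]
    have := mul_nonneg (sq_nonneg R) hy.1.le
    linarith
  · exact intervalIntegrable_const
  · refine Eventually.of_forall fun y hy => ?_
    rw [Set.uIoc_of_le hη.le] at hy
    refine squeeze_zero_norm (fun R => hn R y hy.1.le hy.2) ?_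
    refine Real.tendsto_exp_neg_atTop_nhds_zero.comp ?_
    exact (tendsto_pow_atTop two_ne_zero).atTop_mul_const hy.1

theorem G_integrable (h : ℝ → ℝ) (hc : Continuous h) (hb : ∀ t, |h t| ≤ 1) :
    Integrable (fun t : ℝ => Real.exp (-t^2) * h t) := by
  have h1 : Integrable (fun t : ℝ => Real.exp (-t^2)) := by
    simpa using integrable_exp_neg_mul_sq (b := 1) one_pos
  refine h1.mono' (by fun_prop) (Eventually.of_forall fun t => ?_)
  rw [norm_mul, Real.norm_eq_abs, Real.norm_eq_abs, Real.abs_exp]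
  exact mul_le_of_le_one_right (Real.exp_pos _).le (hb t)

theorem G_decomp (c t : ℝ) : Complex.exp (-(t:ℂ)^2 + Complex.I * ((t:ℂ)^3 / c)) =
    ((Real.exp (-t^2) * Real.cos (t^3 / c) : ℝ) : ℂ) +
    ((Real.exp (-t^2) * Real.sin (t^3 / c) : ℝ) : ℂ) * Complex.I := by
  rw [Complex.exp_add, mul_comm Complex.I, Complex.exp_mul_I]
  push_cast
  ring

theorem G_int (c : ℝ) :
    Integrable (fun t : ℝ => Complex.exp (-(t:ℂ)^2 + Complex.I * ((t:ℂ)^3 / c))) ∧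
    ∫ t : ℝ, Complex.exp (-(t:ℂ)^2 + Complex.I * ((t:ℂ)^3 / c)) =
      ((∫ t : ℝ, Real.exp (-t^2) * Real.cos (t^3 / c) : ℝ) : ℂ) := by
  have hc := G_integrable (fun t => Real.cos (t^3 / c)) (by fun_prop)
    (fun t => Real.abs_cos_le_one _)
  have hs := G_integrable (fun t => Real.sin (t^3 / c)) (by fun_prop)
    (fun t => Real.abs_sin_le_one _)
  simp_rw [G_decomp]
  refine ⟨hc.ofReal.add (hs.ofReal.mul_const _), ?_⟩
  have h0 : ∫ t : ℝ, Real.exp (-t^2) * Real.sin (t^3 / c) = 0 := by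
    have := integral_neg_eq_self (fun t : ℝ => Real.exp (-t^2) * Real.sin (t^3 / c)) volume
    have e : ∀ t : ℝ, Real.exp (-(-t)^2) * Real.sin ((-t)^3 / c) =
        -(Real.exp (-t^2) * Real.sin (t^3 / c)) := by
      intro t
      rw [neg_sq, Odd.neg_pow (by decide), neg_div, Real.sin_neg]
      ring
    simp_rw [e] at this
    rw [integral_neg] at this
    linarith
  have a1 : ∀ f : ℝ → ℝ, ∫ t : ℝ, ((f t : ℝ) : ℂ) = ((∫ t, f t : ℝ) : ℂ) :=
    fun f => integral_ofReal
  have a2 := integral_add (μ := volume) (hc.ofReal (𝕜 := ℂ))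
    ((hs.ofReal (𝕜 := ℂ)).mul_const Complex.I)
  refine a2.trans ?_
  rw [integral_mul_const]
  refine (congrArg₂ (fun x y : ℂ => x + y * Complex.I) 
    (a1 (fun t => Real.exp (-t^2) * Real.cos (t^3 / c)))
    (a1 (fun t => Real.exp (-t^2) * Real.sin (t^3 / c)))).trans ?_
  rw [h0]
  simp

theorem shift_eq (η : ℝ) (hη : 0 < η) (s : ℝ) :
    Complex.exp (Complex.I * (((s : ℂ) + η * Complex.I) ^ 3 / 3 +
        ((η ^ 2 : ℝ) : ℂ) * ((s : ℂ) + η * Complex.I))) =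
    ((Real.exp (-(2 * η ^ 3 / 3)) : ℝ) : ℂ) *
      Complex.exp (-((√η * s : ℝ):ℂ)^2 + Complex.I *
        (((√η * s : ℝ):ℂ)^3 / ((3 * η ^ ((3:ℝ)/2) : ℝ) : ℂ))) := by
  have h2 : √η ^ 2 = η := Real.sq_sqrt hη.le
  have h3 : η ^ ((3:ℝ)/2) = √η ^ 3 := by
    rw [Real.sqrt_eq_rpow, ← Real.rpow_natCast, ← Real.rpow_mul hη.le]
    norm_num
  have hp : √η ^ 3 ≠ 0 := by positivity
  have e1 : (√η * s) ^ 2 = η * s ^ 2 := by rw [mul_pow, h2]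
  have e2 : (√η * s) ^ 3 / (3 * η ^ ((3:ℝ)/2)) = s ^ 3 / 3 := by
    rw [h3, mul_pow]; field_simp
  rw [← Complex.ofReal_pow, ← Complex.ofReal_pow, ← Complex.ofReal_div, e1, e2,
    Complex.ofReal_exp, ← Complex.exp_add]
  congr 1
  push_cast
  ring_nf
  simp only [Complex.I_sq, Complex.I_pow_three, Complex.I_pow_four]
  ring

theorem airy_lim (η : ℝ) (hη : 0 < η) :
    Tendsto (fun R : ℝ => ∫ t in (-R)..R,
      Complex.exp (Complex.I * ((t : ℂ)^3 / 3 + ((η ^ 2 : ℝ) : ℂ) * t))) atTop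
      (nhds (((Real.exp (-(2 * η ^ 3 / 3)) * (√η)⁻¹ *
        ∫ t : ℝ, Real.exp (-t^2) * Real.cos (t^3 / (3 * η ^ ((3:ℝ)/2))) : ℝ) : ℂ))) := by
  have hsq : 0 < √η := Real.sqrt_pos.mpr hη
  obtain ⟨hi, hI⟩ := G_int (3 * η ^ ((3:ℝ)/2))
  have htop : Tendsto (fun R : ℝ => ∫ s in (-R)..R,
      Complex.exp (Complex.I * (((s : ℂ) + η * Complex.I) ^ 3 / 3 +
        ((η ^ 2 : ℝ) : ℂ) * ((s : ℂ) + η * Complex.I)))) atTop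
      (nhds (((Real.exp (-(2 * η ^ 3 / 3)) * (√η)⁻¹ *
        ∫ t : ℝ, Real.exp (-t^2) * Real.cos (t^3 / (3 * η ^ ((3:ℝ)/2))) : ℝ) : ℂ))) := by
    simp_rw [shift_eq η hη]
    have h1 := (hi.comp_mul_left' hsq.ne').const_mul
      ((Real.exp (-(2 * η ^ 3 / 3)) : ℝ) : ℂ)
    have h2 := intervalIntegral_tendsto_integral h1 tendsto_neg_atTop_atBot tendsto_id
    convert h2 using 2
    · rfl
    rw [integral_const_mul, Measure.integral_comp_mul_left
      (fun t : ℝ => Complex.exp (-(t:ℂ)^2 + Complex.I * ((t:ℂ)^3 / ((3 * η ^ ((3:ℝ)/2) : ℝ) : ℂ)))),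
      hI, abs_of_pos (inv_pos.mpr hsq), Complex.real_smul]
    push_cast
    ring
  have h1 := side_tendsto η hη 1 (by norm_num)
  have h2 := side_tendsto η hη (-1) (by norm_num)
  have h3 := (htop.sub (h1.const_mul Complex.I)).add (h2.const_mul Complex.I)
  simp only [mul_zero, sub_zero, add_zero] at h3
  refine h3.congr fun R => ?_
  have hr := Complex.integral_boundary_rect_eq_zero_of_differentiableOn
    (fun z : ℂ => Complex.exp (Complex.I * (z ^ 3 / 3 + ((η ^ 2 : ℝ) : ℂ) * z)))
    (⟨-R, 0⟩ : ℂ) (⟨R, η⟩ : ℂ) (by fun_prop)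
  simp only [Complex.ofReal_zero, zero_mul, add_zero, smul_eq_mul] at hr
  simp only [one_mul, neg_one_mul]
  linear_combination -hr

/-- For every real `η > 0`,
`2π √η e^{2η³/3} Ai(η²) = ∫_{-∞}^{∞} e^{-t²} cos(t³/(3 η^{3/2})) dt`,
the integral being absolutely convergent. -/
theorem airy_real_integral_formula (η : ℝ) (hη : 0 < η) :
    MeasureTheory.Integrable
      (fun t : ℝ => Real.exp (-t^2) * Real.cos (t^3 / (3 * η ^ ((3:ℝ)/2)))) ∧
    ((2 * Real.pi * Real.sqrt η * Real.exp (2 * η^3 / 3) : ℝ) : ℂ) * Ai (η^2) =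
      ((∫ t : ℝ, Real.exp (-t^2) * Real.cos (t^3 / (3 * η ^ ((3:ℝ)/2))) : ℝ) : ℂ) := by
  refine ⟨G_integrable (fun t => Real.cos (t^3 / (3 * η ^ ((3:ℝ)/2)))) (by fun_prop)
    (fun t => Real.abs_cos_le_one _), ?_⟩
  rw [Ai, (airy_lim η hη).limUnder_eq]
  have hsq : √η ≠ 0 := (Real.sqrt_pos.mpr hη).ne'
  have hpi := Real.pi_ne_zero
  have he := (Real.exp_pos (2 * η ^ 3 / 3)).ne'
  rw [← Complex.ofReal_inv, ← Complex.ofReal_mul, ← Complex.ofReal_mul, Real.exp_neg]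
  congr 1
  field_simp
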